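/- Let P be as in the context and let f ∈ C_0^∞(ℝ). If f̃ and f̌ are two almost holomorphic extensions of f, then the functions z ↦ (∂f̃/∂z̄)(z)·(z·1 − P)⁻¹ and z ↦ (∂f̌/∂z̄)(z)·(z·1 − P)⁻¹ (defined as 0 for z ∈ ℝ) are Bochner integrable on ℂ with respect to Lebesgue measure L(dz), and −(1/π)∫_ℂ (∂f̃/∂z̄)(z)(z·1 − P)⁻¹ L(dz) = −(1/π)∫_ℂ (∂f̌/∂z̄)(z)(z·1 − P)⁻¹ L(dz). -/

import Mathlib

open MeasureTheory Complex Real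

noncomputable section

/-- The Cauchy–Riemann operator `∂F/∂z̄ = (∂F/∂x + i ∂F/∂y)/2`. -/
def dbar (F : ℂ → ℂ) (z : ℂ) : ℂ :=
  (fderiv ℝ F z 1 + Complex.I * fderiv ℝ F z Complex.I) / 2

/-- `F` is an almost holomorphic extension of `f ∈ C_0^∞(ℝ)`. -/
def IsAHExt (f : ℝ → ℂ) (F : ℂ → ℂ) : Prop :=
  ContDiff ℝ (⊤ : ℕ∞) F ∧ HasCompactSupport F ∧ (∀ x : ℝ, F x = f x) ∧
    ∀ N : ℕ, ∃ C : ℝ, ∀ z : ℂ, ‖dbar F z‖ ≤ C * |z.im| ^ N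

/-- The resolvent `(z·1 − P)⁻¹` (equal to `0` when `z·1 − P` is not invertible). -/
def res {B : Type*} [NormedAddCommGroup B] [NormedSpace ℂ B] (P : B →L[ℂ] B) (z : ℂ) :
    B →L[ℂ] B := Ring.inverse (z • (1 : B →L[ℂ] B) - P)

/-- The spectrum of `P` is real. -/
def RealSpectrum {B : Type*} [NormedAddCommGroup B] [NormedSpace ℂ B]
    (P : B →L[ℂ] B) : Prop := ∀ z ∈ spectrum ℂ P, z.im = 0

/-- The resolvent of `P` has locally temperate growth near `ℝ`. -/
def TemperateResolventLoc {B : Type*} [NormedAddCommGroup B] [NormedSpace ℂ B]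
    (P : B →L[ℂ] B) : Prop :=
  ∀ R > (0:ℝ), ∃ C N : ℝ, 0 ≤ C ∧ 0 ≤ N ∧ ∀ z : ℂ, z.im ≠ 0 → ‖z‖ ≤ R →
    ‖res P z‖ ≤ C * |z.im| ^ (-N)

/-- Flatness along the real axis. -/
def Flat (g : ℂ → ℂ) : Prop := ∀ N : ℕ, ∃ C : ℝ, ∀ z : ℂ, ‖g z‖ ≤ C * |z.im| ^ N

lemma Flat.pos {g : ℂ → ℂ} (h : Flat g) (N : ℕ) :
    ∃ C : ℝ, 0 ≤ C ∧ ∀ z : ℂ, ‖g z‖ ≤ C * |z.im| ^ N := by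
  obtain ⟨C, hC⟩ := h N
  refine ⟨|C|, abs_nonneg _, fun z => (hC z).trans ?_⟩
  gcongr
  exact le_abs_self C

lemma Flat.sub {g h : ℂ → ℂ} (hg : Flat g) (hh : Flat h) : Flat (fun z => g z - h z) := by
  intro N
  obtain ⟨C, hC⟩ := hg N
  obtain ⟨D, hD⟩ := hh N
  refine ⟨C + D, fun z => (norm_sub_le _ _).trans ?_⟩
  have := hC z
  have := hD z
  linarith

lemma Flat.const_mul {g : ℂ → ℂ} (hg : Flat g) (c : ℂ) : Flat (fun z => c * g z) := by
  intro N
  obtain ⟨C, hC⟩ := hg N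
  refine ⟨‖c‖ * C, fun z => ?_⟩
  rw [norm_mul, mul_assoc]
  exact mul_le_mul_of_nonneg_left (hC z) (norm_nonneg _)

lemma contDiff_dx {g : ℂ → ℂ} (hg : ContDiff ℝ (⊤ : ℕ∞) g) (v : ℂ) :
    ContDiff ℝ (⊤ : ℕ∞) (fun z => fderiv ℝ g z v) := by
  have h : ContDiff ℝ (⊤ : ℕ∞) (fderiv ℝ g) := hg.fderiv_right (by simp)
  exact h.clm_apply contDiff_const

lemma contDiff_dbar {g : ℂ → ℂ} (hg : ContDiff ℝ (⊤ : ℕ∞) g) :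
    ContDiff ℝ (⊤ : ℕ∞) (dbar g) := by
  unfold dbar
  have h1 := contDiff_dx hg 1
  have h2 := contDiff_dx hg Complex.I
  exact (h1.add (contDiff_const.mul h2)).div_const 2

lemma hcs_dbar {g : ℂ → ℂ} (hg : HasCompactSupport g) : HasCompactSupport (dbar g) := by
  refine (hg.fderiv ℝ).mono ?_
  intro z hz
  contrapose! hz
  simp only [Function.mem_support, not_not] at hz ⊢
  simp [dbar, hz]

lemma taylor_bound {g : ℂ → ℂ} (hg : ContDiff ℝ (⊤ : ℕ∞) g) (hc : HasCompactSupport g) :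
    ∃ K : ℝ, 0 ≤ K ∧ ∀ z : ℂ, ∀ h : ℝ, 0 < h →
      ‖fderiv ℝ g z 1‖ * h ≤ ‖g (z + h)‖ + ‖g z‖ + K * h * h := by
  obtain ⟨K, hK⟩ := ContDiff.lipschitzWith_of_hasCompactSupport
    (hc.fderiv_apply (𝕜 := ℝ) (1 : ℂ)) (contDiff_dx hg 1) (by simp)
  refine ⟨K, K.2, fun z h hh => ?_⟩
  have key := norm_image_sub_le_of_norm_deriv_le_segment' (a := 0) (b := h)
    (f := fun t : ℝ => g (z + t) - t * fderiv ℝ g z 1)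
    (f' := fun t : ℝ => fderiv ℝ g (z + t) 1 - fderiv ℝ g z 1) (C := K * h) ?_ ?_ h
    ⟨hh.le, le_rfl⟩
  · simp only [Complex.ofReal_zero, add_zero, zero_mul, sub_zero] at key
    have e : ‖(h : ℂ) * fderiv ℝ g z 1‖ = ‖fderiv ℝ g z 1‖ * h := by
      rw [norm_mul, Complex.norm_real, Real.norm_of_nonneg hh.le, mul_comm]
    rw [← e]
    have : (h : ℂ) * fderiv ℝ g z 1
        = g (z + h) - g z - (g (z + h) - h * fderiv ℝ g z 1 - g z) := by ring
    rw [this]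
    exact (norm_sub_le _ _).trans (add_le_add (norm_sub_le _ _) key)
  · intro t _
    apply HasDerivAt.hasDerivWithinAt
    have h1 : HasDerivAt (fun t : ℝ => z + (t : ℂ)) 1 t := by
      simpa using (Complex.ofRealCLM.hasDerivAt (x := t)).const_add z
    have h2 : HasFDerivAt g (fderiv ℝ g (z + t)) (z + t) :=
      (hg.differentiable (by simp) _).hasFDerivAt
    have h3 := h2.comp_hasDerivAt t h1
    have h4 : HasDerivAt (fun t : ℝ => (t : ℂ) * fderiv ℝ g z 1) (fderiv ℝ g z 1) t := by
      simpa using (Complex.ofRealCLM.hasDerivAt (x := t)).mul_const (fderiv ℝ g z 1)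
    exact h3.sub h4
  · intro t ht
    have := hK.dist_le_mul (z + t) z
    rw [dist_eq_norm, dist_eq_norm, add_sub_cancel_left, Complex.norm_real,
      Real.norm_of_nonneg ht.1] at this
    refine this.trans ?_
    exact mul_le_mul_of_nonneg_left ht.2.le K.2

lemma flat_dx {g : ℂ → ℂ} (hg : ContDiff ℝ (⊤ : ℕ∞) g) (hc : HasCompactSupport g)
    (hf : Flat g) : Flat (fun z => fderiv ℝ g z 1) := by
  obtain ⟨K, hK0, hK⟩ := taylor_bound hg hc
  intro N
  obtain ⟨C, hC0, hC⟩ := hf.pos (N + N)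
  refine ⟨C + C + K, fun z => ?_⟩
  have him : ∀ h : ℝ, (z + h).im = z.im := by simp
  have main : ∀ h : ℝ, 0 < h → ‖fderiv ℝ g z 1‖ * h
      ≤ (C + C) * (|z.im| ^ N * |z.im| ^ N) + K * h * h := by
    intro h hh
    have h1 := hK z h hh
    have h2 := hC z
    have h3 := hC (z + h)
    rw [him] at h3
    rw [pow_add] at h2 h3
    linarith
  rcases (pow_nonneg (abs_nonneg z.im) N).eq_or_lt with h0 | h0
  · rw [← h0] at main ⊢
    rw [mul_zero]
    refine le_of_forall_pos_le_add fun e he => ?_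
    have h1 := main (e / (K + 1)) (by positivity)
    have h2 : ‖fderiv ℝ g z 1‖ ≤ K * (e / (K + 1)) := by
      refine le_of_mul_le_mul_right ?_ (show 0 < e / (K + 1) by positivity)
      linarith
    have h3 : K * (e / (K + 1)) ≤ e := by
      rw [← mul_div_assoc, div_le_iff₀ (by positivity)]
      nlinarith
    linarith
  · have h1 := main _ h0
    refine le_of_mul_le_mul_right ?_ h0
    linarith

lemma dbar_dx {H : ℂ → ℂ} (hH : ContDiff ℝ (⊤ : ℕ∞) H) (z : ℂ) :
    dbar (fun z => fderiv ℝ H z 1) z = fderiv ℝ (dbar H) z 1 := by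
  have hs : IsSymmSndFDerivAt ℝ H z := hH.contDiffAt.isSymmSndFDerivAt (by
    simp only [minSmoothness_of_isRCLikeNormedField]
    exact WithTop.coe_le_coe.mpr (le_top : (2 : ℕ∞) ≤ ⊤))
  have hd : DifferentiableAt ℝ (fderiv ℝ H) z :=
    ((hH.fderiv_right (m := (⊤ : ℕ∞)) (by simp)).differentiable (by simp)) z
  have e : ∀ v w : ℂ, fderiv ℝ (fun z => fderiv ℝ H z v) z w
      = fderiv ℝ (fderiv ℝ H) z w v := by
    intro v w
    have := hd.hasFDerivAt.clm_apply (hasFDerivAt_const v z)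
    rw [this.fderiv]
    simp
  have h1 : HasFDerivAt (fun z => fderiv ℝ H z 1) _ z :=
    ((contDiff_dx hH 1).differentiable (by simp) z).hasFDerivAt
  have h2 : HasFDerivAt (fun z => fderiv ℝ H z Complex.I) _ z :=
    ((contDiff_dx hH Complex.I).differentiable (by simp) z).hasFDerivAt
  have h3 : HasFDerivAt (dbar H) _ z := (h1.add (h2.const_mul Complex.I)).mul_const (2⁻¹ : ℂ)
  rw [h3.fderiv]
  simp only [dbar, e, ContinuousLinearMap.smul_apply, ContinuousLinearMap.add_apply, smul_eq_mul]
  rw [hs.eq Complex.I 1]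
  ring

lemma ext_bound (N : ℕ) : ∀ H : ℂ → ℂ, ContDiff ℝ (⊤ : ℕ∞) H → HasCompactSupport H →
    (∀ x : ℝ, H x = 0) → Flat (dbar H) → ∃ C : ℝ, ∀ z : ℂ, ‖H z‖ ≤ C * |z.im| ^ N := by
  induction N with
  | zero =>
    intro H hH hc _ _
    obtain ⟨C, hC⟩ := hc.exists_bound_of_continuous hH.continuous
    exact ⟨C, fun z => by simpa using hC z⟩
  | succ N ih =>
    intro H hH hc h0 hd
    obtain ⟨C, hC⟩ := ih (fun z => fderiv ℝ H z 1) (contDiff_dx hH 1) (hc.fderiv_apply (𝕜 := ℝ) 1)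
      (by
        intro x
        have h1 : HasDerivAt (fun t : ℝ => (t : ℂ)) 1 x := by
          simpa using (hasDerivAt_id x).ofReal_comp
        have h2 : HasFDerivAt H (fderiv ℝ H x) (x : ℂ) :=
          (hH.differentiable (by simp) _).hasFDerivAt
        have h3 := h2.comp_hasDerivAt x h1
        have h4 : (H ∘ fun t : ℝ => (t : ℂ)) = fun _ => 0 := by
          ext t
          simp [h0]
        rw [h4] at h3
        exact h3.unique (hasDerivAt_const _ _))
      (by
        have : dbar (fun z => fderiv ℝ H z 1) = fun z => fderiv ℝ (dbar H) z 1 :=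
          funext (dbar_dx hH)
        rw [this]
        exact flat_dx (contDiff_dbar hH) (hcs_dbar hc) hd)
    obtain ⟨D, hD⟩ := hd N
    have hI : ∀ z, ‖fderiv ℝ H z Complex.I‖ ≤ |C + 2 * D| * |z.im| ^ N := by
      intro z
      have e : fderiv ℝ H z Complex.I
          = Complex.I * fderiv ℝ H z 1 - 2 * Complex.I * dbar H z := by
        unfold dbar
        linear_combination (fderiv ℝ H z Complex.I) * Complex.I_mul_I
      rw [e]
      refine (norm_sub_le _ _).trans ?_
      have h1 := hC z
      have h2 := hD z
      have h3 : (C + 2 * D) * |z.im| ^ N ≤ |C + 2 * D| * |z.im| ^ N := by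
        gcongr
        exact le_abs_self _
      simp only [norm_mul, Complex.norm_I, one_mul, mul_one, Complex.norm_ofNat]
      linarith
    refine ⟨|C + 2 * D|, fun z => ?_⟩
    have key := norm_image_sub_le_of_norm_deriv_le_segment_01'
      (f := fun t : ℝ => H (z.re + t * (z.im * Complex.I)))
      (f' := fun t : ℝ => fderiv ℝ H (z.re + t * (z.im * Complex.I)) (z.im * Complex.I))
      (C := |C + 2 * D| * |z.im| ^ (N + 1)) ?_ ?_
    · simpa [h0, Complex.re_add_im] using key
    · intro t _
      apply HasDerivAt.hasDerivWithinAt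
      have h1 : HasDerivAt (fun t : ℝ => z.re + (t : ℂ) * (z.im * Complex.I))
          (z.im * Complex.I) t := by
        simpa using ((Complex.ofRealCLM.hasDerivAt (x := t)).mul_const
          (z.im * Complex.I)).const_add (z.re : ℂ)
      exact (hH.differentiable (by simp) _).hasFDerivAt.comp_hasDerivAt t h1
    · intro t ht
      have e : (z.im : ℂ) * Complex.I = z.im • Complex.I := by simp
      have h1 := hI (z.re + t * (z.im * Complex.I))
      rw [e, ContinuousLinearMap.map_smul, norm_smul, ← e, Real.norm_eq_abs]
      have h2 : (z.re + t * (z.im * Complex.I) : ℂ).im = t * z.im := by simp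
      rw [h2] at h1
      have h3 : |t * z.im| ≤ |z.im| := by
        rw [abs_mul, abs_of_nonneg ht.1]
        exact mul_le_of_le_one_left (abs_nonneg _) ht.2.le
      calc _ ≤ |z.im| * (|C + 2 * D| * |t * z.im| ^ N) := by gcongr
        _ ≤ |z.im| * (|C + 2 * D| * |z.im| ^ N) := by gcongr
        _ = _ := by ring

/-- Locally temperate function off the real axis. -/
def Temp {E : Type*} [NormedAddCommGroup E] (S : ℂ → E) : Prop :=
  (∀ z : ℂ, z.im ≠ 0 → ContinuousAt S z) ∧ ∀ R > (0:ℝ), ∃ C : ℝ, ∃ n : ℕ,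
    ∀ z : ℂ, z.im ≠ 0 → ‖z‖ ≤ R → |z.im| ^ n * ‖S z‖ ≤ C

section
variable {E : Type*} [NormedAddCommGroup E] [NormedSpace ℂ E]

/-- Product extended by zero. -/
def ext0 (A : ℂ → ℂ) (S : ℂ → E) (z : ℂ) : E := if z.im = 0 then 0 else A z • S z

lemma ext0_bound {A : ℂ → ℂ} {S : ℂ → E} (hc : HasCompactSupport A)
    (hf : Flat A) (hS : Temp S) : ∃ C : ℝ, 0 ≤ C ∧ ∀ z, ‖ext0 A S z‖ ≤ C * |z.im| ^ 2 := by
  obtain ⟨R, hR0, hR⟩ := hc.isCompact.isBounded.exists_pos_norm_le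
  obtain ⟨C, n, hC⟩ := hS.2 R hR0
  obtain ⟨D, hD0, hD⟩ := hf.pos (n + 2)
  refine ⟨D * |C|, by positivity, fun z => ?_⟩
  unfold ext0
  split_ifs with h
  · simp only [norm_zero]; positivity
  by_cases hz : A z = 0
  · simp only [hz, zero_smul, norm_zero]; positivity
  have hz' : ‖z‖ ≤ R := hR z (subset_tsupport _ hz)
  have h1 := (hC z h hz').trans (le_abs_self C)
  rw [norm_smul]
  calc ‖A z‖ * ‖S z‖ ≤ (D * |z.im| ^ (n + 2)) * ‖S z‖ := by gcongr; exact hD z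
    _ = D * |z.im| ^ 2 * (|z.im| ^ n * ‖S z‖) := by ring
    _ ≤ D * |z.im| ^ 2 * |C| := by gcongr
    _ = _ := by ring

lemma abs_im_le_of_real {z w : ℂ} (hw : w.im = 0) : |z.im| ≤ ‖z - w‖ := by
  have := Complex.abs_im_le_norm (z - w)
  simpa [hw] using this

lemma ext0_zero_deriv {A : ℂ → ℂ} {S : ℂ → E} (hc : HasCompactSupport A)
    (hf : Flat A) (hS : Temp S) {w : ℂ} (hw : w.im = 0) :
    HasFDerivAt (ext0 A S) (0 : ℂ →L[ℝ] E) w := by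
  obtain ⟨C, hC0, hC⟩ := ext0_bound hc hf hS
  refine Asymptotics.IsBigO.hasFDerivAt (n := 2) ?_ (by norm_num)
  refine Asymptotics.IsBigO.of_bound C (Filter.Eventually.of_forall fun z => ?_)
  refine (hC z).trans ?_
  rw [norm_pow, norm_norm]
  gcongr
  exact abs_im_le_of_real hw

lemma im_ne_nhds {z : ℂ} (hz : z.im ≠ 0) : ∀ᶠ w in nhds z, w.im ≠ 0 :=
  Complex.continuous_im.continuousAt.eventually_ne hz

lemma ext0_eventually {A : ℂ → ℂ} {S : ℂ → E} {z : ℂ} (hz : z.im ≠ 0) :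
    ext0 A S =ᶠ[nhds z] fun w => A w • S w := by
  filter_upwards [im_ne_nhds hz] with w hw
  simp [ext0, hw]

lemma ext0_integrable {A : ℂ → ℂ} {S : ℂ → E} (hA : Continuous A) (hc : HasCompactSupport A)
    (hf : Flat A) (hS : Temp S) : Integrable (ext0 A S) := by
  refine Continuous.integrable_of_hasCompactSupport ?_ ?_
  · rw [continuous_iff_continuousAt]
    intro z
    by_cases hz : z.im = 0
    · exact (ext0_zero_deriv hc hf hS hz).continuousAt
    · exact (hA.continuousAt.smul (hS.1 z hz)).congr (ext0_eventually hz).symm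
  · refine hc.mono ?_
    intro z hz
    contrapose! hz
    simp only [Function.mem_support, not_not] at hz ⊢
    simp [ext0, hz]

lemma integral_dbar_zero {H : ℂ → ℂ} {S T : ℂ → E} (hH : ContDiff ℝ (⊤ : ℕ∞) H)
    (hc : HasCompactSupport H) (h0 : ∀ x : ℝ, H x = 0) (hd : Flat (dbar H))
    (hS : Temp S) (hT : Temp T) (hST : ∀ z : ℂ, z.im ≠ 0 → HasDerivAt S (T z) z) :
    ∫ z, ext0 (dbar H) S z = 0 := by
  have hHf : Flat H := fun N => ext_bound N H hH hc h0 hd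
  have h1f : Flat (fun z => fderiv ℝ H z 1) := flat_dx hH hc hHf
  have hIf : Flat (fun z => fderiv ℝ H z Complex.I) := by
    have e : (fun z => fderiv ℝ H z Complex.I)
        = fun z => Complex.I * fderiv ℝ H z 1 - 2 * Complex.I * dbar H z := by
      funext z
      unfold dbar
      linear_combination (fderiv ℝ H z Complex.I) * Complex.I_mul_I
    rw [e]
    exact (h1f.const_mul _).sub (hd.const_mul _)
  have hvint : ∀ v : ℂ, Flat (fun z => fderiv ℝ H z v) →
      Integrable (fun z => ext0 (fun z => fderiv ℝ H z v) S z + v • ext0 H T z) := by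
    intro v hv
    exact (ext0_integrable (contDiff_dx hH v).continuous (hc.fderiv_apply (𝕜 := ℝ) v) hv hS).add
      ((ext0_integrable hH.continuous hc hHf hT).smul v)
  have key : ∀ v : ℂ, Flat (fun z => fderiv ℝ H z v) →
      ∫ z, (ext0 (fun z => fderiv ℝ H z v) S z + v • ext0 H T z) = 0 := by
    intro v hv
    have := integral_bilinear_hasLineDerivAt_right_eq_neg_left_of_integrable (μ := volume)
      (f := fun _ : ℂ => (1 : ℝ)) (f' := fun _ => 0) (g := ext0 H S) (v := v)
      (g' := fun z => ext0 (fun z => fderiv ℝ H z v) S z + v • ext0 H T z)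
      (B := ContinuousLinearMap.lsmul ℝ ℝ) (by simp)
      (by simpa using hvint v hv) (by simpa using ext0_integrable hH.continuous hc hHf hS)
      (by
        intro z _
        simpa using (hasFDerivAt_const (𝕜 := ℝ) (1 : ℝ) z).hasLineDerivAt v)
      (by
        intro z _
        by_cases hz : z.im = 0
        · have := (ext0_zero_deriv hc hHf hS hz).hasLineDerivAt v
          simpa [ext0, hz] using this
        · have h1 : HasFDerivAt H (fderiv ℝ H z) z := (hH.differentiable (by simp) z).hasFDerivAt
          have h2 := (hST z hz).hasFDerivAt.restrictScalars ℝ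
          have h3 := ((h1.smul h2).congr_of_eventuallyEq
            (ext0_eventually hz)).hasLineDerivAt v
          convert h3 using 1
          simp only [ext0, hz, if_false]
          simp [smul_comm v (H z), add_comm])
    simpa using this
  have e : ∀ z, ext0 (dbar H) S z = (2⁻¹ : ℂ) •
      ((ext0 (fun z => fderiv ℝ H z 1) S z + (1 : ℂ) • ext0 H T z) + Complex.I •
      (ext0 (fun z => fderiv ℝ H z Complex.I) S z + Complex.I • ext0 H T z)) := by
    intro z
    unfold ext0
    split_ifs with hz
    · simp
    · simp only [dbar]
      rw [smul_add Complex.I, smul_smul Complex.I Complex.I, Complex.I_mul_I]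
      module
  simp_rw [e]
  have hI2 : Integrable (fun z => Complex.I •
      (ext0 (fun z => fderiv ℝ H z Complex.I) S z + Complex.I • ext0 H T z)) :=
    (hvint Complex.I hIf).smul Complex.I
  rw [integral_smul, integral_add (hvint 1 h1f) hI2, integral_smul,
    key 1 h1f, key Complex.I hIf]
  simp

end

lemma mem_resolventSet_of {B : Type*} [NormedAddCommGroup B] [NormedSpace ℂ B]
    {P : B →L[ℂ] B} (hspec : RealSpectrum P) {z : ℂ} (hz : z.im ≠ 0) :
    z ∈ resolventSet ℂ P := by
  by_contra h
  exact hz (hspec z h)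

lemma res_eq {B : Type*} [NormedAddCommGroup B] [NormedSpace ℂ B]
    (P : B →L[ℂ] B) : res P = resolvent P := by
  funext z
  simp [res, resolvent, Algebra.algebraMap_eq_smul_one]

lemma res_hasDerivAt {B : Type*} [NormedAddCommGroup B] [NormedSpace ℂ B] [CompleteSpace B]
    {P : B →L[ℂ] B} (hspec : RealSpectrum P) {z : ℂ} (hz : z.im ≠ 0) :
    HasDerivAt (res P) (-(res P z) ^ 2) z := by
  rw [res_eq]
  exact spectrum.hasDerivAt_resolvent_const_left (mem_resolventSet_of hspec hz)

lemma res_temp {B : Type*} [NormedAddCommGroup B] [NormedSpace ℂ B] [CompleteSpace B]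
    {P : B →L[ℂ] B} (hspec : RealSpectrum P) (hres : TemperateResolventLoc P) :
    Temp (res P) := by
  refine ⟨fun z hz => (res_hasDerivAt hspec hz).continuousAt, fun R hR => ?_⟩
  obtain ⟨C, N, hC, hN, h⟩ := hres R hR
  refine ⟨C * R ^ ((⌈N⌉₊ : ℝ) - N), ⌈N⌉₊, fun z hz hzR => ?_⟩
  have hpos : 0 < |z.im| := abs_pos.mpr hz
  have hle : |z.im| ≤ R := (Complex.abs_im_le_norm z).trans hzR
  calc |z.im| ^ ⌈N⌉₊ * ‖res P z‖ ≤ |z.im| ^ ⌈N⌉₊ * (C * |z.im| ^ (-N)) := by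
        gcongr
        exact h z hz hzR
    _ = C * |z.im| ^ ((⌈N⌉₊ : ℝ) - N) := by
        rw [sub_eq_add_neg, Real.rpow_add hpos, Real.rpow_natCast]
        ring
    _ ≤ _ := by
        have := Nat.le_ceil N
        gcongr

lemma res_sq_temp {B : Type*} [NormedAddCommGroup B] [NormedSpace ℂ B] [CompleteSpace B]
    {P : B →L[ℂ] B} (hspec : RealSpectrum P) (hres : TemperateResolventLoc P) :
    Temp (fun z => -(res P z) ^ 2) := by
  have ht := res_temp hspec hres
  refine ⟨fun z hz => ((ht.1 z hz).pow 2).neg, fun R hR => ?_⟩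
  obtain ⟨C, n, h⟩ := ht.2 R hR
  refine ⟨C * C, n + n, fun z hz hzR => ?_⟩
  have h1 := h z hz hzR
  have h0 : 0 ≤ |z.im| ^ n * ‖res P z‖ := by positivity
  rw [norm_neg, sq, pow_add]
  calc _ ≤ |z.im| ^ n * |z.im| ^ n * (‖res P z‖ * ‖res P z‖) := by
        gcongr
        exact norm_mul_le _ _
    _ = (|z.im| ^ n * ‖res P z‖) * (|z.im| ^ n * ‖res P z‖) := by ring
    _ ≤ C * C := mul_le_mul h1 h1 h0 (h0.trans h1)

/-- Well-definedness of `f(P)` in Definition 1 (case of one operator):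
for two almost holomorphic extensions `F`, `G` of `f ∈ C_0^∞(ℝ)` the integrands
are Bochner integrable on `ℂ` and the corresponding integrals agree. -/
theorem calculus_well_defined {B : Type*} [NormedAddCommGroup B] [NormedSpace ℂ B]
    [CompleteSpace B] (P : B →L[ℂ] B)
    (hspec : RealSpectrum P) (hres : TemperateResolventLoc P)
    (f : ℝ → ℂ) (hf_smooth : ContDiff ℝ (⊤ : ℕ∞) f) (hf_supp : HasCompactSupport f)
    (F G : ℂ → ℂ) (hF : IsAHExt f F) (hG : IsAHExt f G) :
    Integrable (fun z : ℂ => if z.im = 0 then 0 else dbar F z • res P z) ∧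
    Integrable (fun z : ℂ => if z.im = 0 then 0 else dbar G z • res P z) ∧
    (-(1/(π:ℂ))) • ∫ z : ℂ, (if z.im = 0 then 0 else dbar F z • res P z) =
      (-(1/(π:ℂ))) • ∫ z : ℂ, (if z.im = 0 then 0 else dbar G z • res P z) := by
  have hT := res_temp hspec hres
  have hF' : Flat (dbar F) := hF.2.2.2
  have hG' : Flat (dbar G) := hG.2.2.2
  have iF : Integrable (ext0 (dbar F) (res P)) :=
    ext0_integrable (contDiff_dbar hF.1).continuous (hcs_dbar hF.2.1) hF' hT
  have iG : Integrable (ext0 (dbar G) (res P)) :=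
    ext0_integrable (contDiff_dbar hG.1).continuous (hcs_dbar hG.2.1) hG' hT
  refine ⟨iF, iG, ?_⟩
  have hd : dbar (fun z => F z - G z) = fun z => dbar F z - dbar G z := by
    funext z
    have h1 := (hF.1.differentiable (by simp) z).hasFDerivAt
    have h2 := (hG.1.differentiable (by simp) z).hasFDerivAt
    have h3 : fderiv ℝ (fun z => F z - G z) z = fderiv ℝ F z - fderiv ℝ G z :=
      (h1.sub h2).fderiv
    simp only [dbar, h3, ContinuousLinearMap.sub_apply]
    ring
  have hz := integral_dbar_zero (H := fun z => F z - G z) (S := res P)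
    (T := fun z => -(res P z) ^ 2) (hF.1.sub hG.1) (hF.2.1.sub hG.2.1)
    (fun x => by simp [hF.2.2.1 x, hG.2.2.1 x])
    (by rw [hd]; exact hF'.sub hG') hT (res_sq_temp hspec hres)
    (fun z hz => res_hasDerivAt hspec hz)
  have e : ∀ z, ext0 (dbar (fun z => F z - G z)) (res P) z
      = ext0 (dbar F) (res P) z - ext0 (dbar G) (res P) z := by
    intro z
    rw [hd]
    unfold ext0
    split_ifs
    · simp
    · rw [sub_smul]
  simp_rw [e] at hz
  rw [integral_sub iF iG, sub_eq_zero] at hz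
  congr 1
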